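/- arXiv:1903.08160 — 4 statements merged into one kernel-verified Lean document; each statement's English description precedes it below -/
import Mathlib

section
/- For a Tychonoff space X, the following are equivalent: (1) the bitopological function space (C(X), τ_k, τ_p) satisfies S_fin(Ω^k_0, Ω^p_0), i.e., for every sequence (A_n) of subsets of C(X) each having the constant zero function 0 in its closure in C_k(X) but with 0 ∉ A_n, one can choose finite B_n ⊆ A_n such that 0 lies in the closure of ⋃_n B_n in C_p(X); (2) X satisfies S_fin(𝒦, Ω), i.e., for every sequence (𝒰_n) of open k-covers of X one can choose finite 𝒱_n ⊆ 𝒰_n such that ⋃_n 𝒱_n is an ω-cover of X. -/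
/-!
A set `U` and a function `f` correspond to each other in two ways: `f = 1` off `U`, and
`U = {|f| < ε}`. A k-cover yields, by separation of compact sets from complements of open
neighbourhoods, a family of functions which equal `1` off a member of the cover and accumulate at
`0` in the compact-open topology. If `0` is pointwise in the closure of such a family, then the sets
involved form an ω-cover, since `|f| < 1` on `F` forces `F` into the set attached to `f`.

Conversely, let `0` be in the compact-open closure of every `A n`, and let `ε n → 0`. The sets
`{|f| < ε n}` with `f ∈ A n` form a k-cover unless one of them is the whole space. If that happens
for infinitely many `n`, the corresponding functions converge to `0` uniformly. Otherwise one
selects an ω-cover from a subsequence of these k-covers. An ω-cover remains one after finitely many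
members are removed, so each finite set lies in `{|f| < ε n}` for a selected `f` with `n`
arbitrarily large.
-/

open Set Filter Topology TopologicalSpace

universe u

/-- The topology of pointwise convergence on `C(X, ℝ)`. -/
def pointwiseTopology (X : Type u) [TopologicalSpace X] : TopologicalSpace C(X, ℝ) :=
  TopologicalSpace.induced (fun f : C(X, ℝ) => (f : X → ℝ)) Pi.topologicalSpace

/-- `𝒰` is an (open) k-cover of `X`: a nontrivial open cover such that every compact
subset of `X` is contained in some member of `𝒰`. -/
def IsKCover {X : Type u} [TopologicalSpace X] (𝒰 : Set (Set X)) : Prop :=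
  (∀ U ∈ 𝒰, IsOpen U) ∧ ⋃₀ 𝒰 = Set.univ ∧ Set.univ ∉ 𝒰 ∧
    ∀ K : Set X, IsCompact K → ∃ U ∈ 𝒰, K ⊆ U

/-- `𝒰` is an (open) ω-cover of `X`: a nontrivial open cover such that every finite
subset of `X` is contained in some member of `𝒰`. -/
def IsOmegaCover {X : Type u} [TopologicalSpace X] (𝒰 : Set (Set X)) : Prop :=
  (∀ U ∈ 𝒰, IsOpen U) ∧ ⋃₀ 𝒰 = Set.univ ∧ Set.univ ∉ 𝒰 ∧
    ∀ F : Set X, F.Finite → ∃ U ∈ 𝒰, F ⊆ U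

/-- `𝒰` is an (open) γ-cover of `X`: an infinite open cover such that for every finite
subset `F` of `X`, all but finitely many members of `𝒰` contain `F`. -/
def IsGammaCover {X : Type u} [TopologicalSpace X] (𝒰 : Set (Set X)) : Prop :=
  (∀ U ∈ 𝒰, IsOpen U) ∧ ⋃₀ 𝒰 = Set.univ ∧ 𝒰.Infinite ∧
    ∀ F : Set X, F.Finite → {U ∈ 𝒰 | ¬ F ⊆ U}.Finite

/-- `iw(X) = ℵ₀`: there is a second-countable Tychonoff space `Y` and a continuous
bijection (one-to-one and onto map) from `X` to `Y`. -/
def CountableIWeight (X : Type u) [TopologicalSpace X] : Prop :=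
  ∃ (Y : Type u) (_ : TopologicalSpace Y), SecondCountableTopology Y ∧ T35Space Y ∧
    ∃ f : X → Y, Continuous f ∧ Function.Bijective f

/-- The selection principle `S₁(𝒜, ℬ)`. -/
def S1sel {α : Type u} (𝒜 ℬ : Set (Set α)) : Prop :=
  ∀ A : ℕ → Set α, (∀ n, A n ∈ 𝒜) →
    ∃ b : ℕ → α, (∀ n, b n ∈ A n) ∧ Set.range b ∈ ℬ

/-- The selection principle `S_fin(𝒜, ℬ)`. -/
def SfinSel {α : Type u} (𝒜 ℬ : Set (Set α)) : Prop :=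
  ∀ A : ℕ → Set α, (∀ n, A n ∈ 𝒜) →
    ∃ B : ℕ → Set α, (∀ n, (B n).Finite ∧ B n ⊆ A n) ∧ (⋃ n, B n) ∈ ℬ

/-- A strategy for player ONE in the game `G₁(𝒜, ℬ)` (a function from finite sequences
of TWO's moves to sets) is winning if it always plays members of `𝒜` and ONE wins every
play in which he follows it. -/
def IsWinningStrategyOneG1 {α : Type u} (𝒜 ℬ : Set (Set α)) (σ : List α → Set α) : Prop :=
  (∀ h : List α, σ h ∈ 𝒜) ∧
    ∀ b : ℕ → α, (∀ n, b n ∈ σ (List.ofFn fun i : Fin n => b i)) → Set.range b ∉ ℬ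

/-- A strategy for player ONE in the game `G_fin(𝒜, ℬ)` (a function from finite sequences
of TWO's moves, which are finite subsets, to sets) is winning if it always plays members of
`𝒜` and ONE wins every play in which he follows it. -/
def IsWinningStrategyOneGfin {α : Type u} (𝒜 ℬ : Set (Set α)) (σ : List (Set α) → Set α) :
    Prop :=
  (∀ h : List (Set α), σ h ∈ 𝒜) ∧
    ∀ B : ℕ → Set α,
      (∀ n, (B n).Finite ∧ B n ⊆ σ (List.ofFn fun i : Fin n => B i)) → (⋃ n, B n) ∉ ℬ

/-- `A ⊆ C(X, ℝ)` is sequentially dense in `C_p(X)`: every continuous function is the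
pointwise limit of a sequence from `A`. -/
def SeqDenseP (X : Type u) [TopologicalSpace X] (A : Set C(X, ℝ)) : Prop :=
  ∀ g : C(X, ℝ), ∃ s : ℕ → C(X, ℝ), (∀ n, s n ∈ A) ∧
    Filter.Tendsto s Filter.atTop (@nhds _ (pointwiseTopology X) g)

/-- The family `Ω^k_0` of subsets of `C(X, ℝ)` not containing `0` but having `0` in their
closure with respect to the compact-open topology. -/
def OmegaKZero (X : Type u) [TopologicalSpace X] (A : Set C(X, ℝ)) : Prop :=
  (0 : C(X, ℝ)) ∉ A ∧ (0 : C(X, ℝ)) ∈ closure A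

/-- The family `Ω^p_0` of subsets of `C(X, ℝ)` not containing `0` but having `0` in their
closure with respect to the topology of pointwise convergence. -/
def OmegaPZero (X : Type u) [TopologicalSpace X] (A : Set C(X, ℝ)) : Prop :=
  (0 : C(X, ℝ)) ∉ A ∧ (0 : C(X, ℝ)) ∈ @closure _ (pointwiseTopology X) A

/-- The family `Γ^p_0` of infinite subsets `A` of `C(X, ℝ)` with `0 ∉ A` such that every
neighborhood of `0` in the topology of pointwise convergence contains all but finitely
many elements of `A`. -/
def GammaPZero (X : Type u) [TopologicalSpace X] (A : Set C(X, ℝ)) : Prop :=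
  A.Infinite ∧ (0 : C(X, ℝ)) ∉ A ∧
    ∀ N ∈ @nhds _ (pointwiseTopology X) (0 : C(X, ℝ)), {f ∈ A | f ∉ N}.Finite

theorem exists_finite_selection_of_injective {ι κ α : Type*} {φ : ι → κ}
    (hφ : Function.Injective φ) {A : κ → Set α} {B : ι → Set α}
    (hB : ∀ i, (B i).Finite ∧ B i ⊆ A (φ i)) :
    ∃ B' : κ → Set α, (∀ k, (B' k).Finite ∧ B' k ⊆ A k) ∧ ⋃ k, B' k = ⋃ i, B i := by
  refine ⟨Function.extend φ B ⊥, fun k => ?_, iSup_extend_bot hφ B⟩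
  by_cases hk : ∃ i, φ i = k
  · obtain ⟨i, rfl⟩ := hk
    simpa only [hφ.extend_apply] using hB i
  · simp [Function.extend_apply' _ _ _ hk]

theorem exists_finite_forall_not_subset {α : Type*} {𝒲 : Set (Set α)} (h𝒲 : 𝒲.Finite)
    (hproper : univ ∉ 𝒲) : ∃ G : Set α, G.Finite ∧ ∀ W ∈ 𝒲, ¬ G ⊆ W := by
  have exists_notMem : ∀ W : 𝒲, ∃ x, x ∉ (W : Set α) := fun W =>
    (ne_univ_iff_exists_notMem W.1).1 (ne_of_mem_of_not_mem W.2 hproper)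
  choose p hp using exists_notMem
  have := h𝒲.to_subtype
  exact ⟨range p, finite_range p, fun W hW hGW => hp ⟨W, hW⟩ (hGW (mem_range_self _))⟩

theorem mem_closure_pi_iff_forall_finite {ι : Type*} {E : ι → Type*} [∀ i, PseudoMetricSpace (E i)]
    {A : Set (∀ i, E i)} {g : ∀ i, E i} :
    g ∈ closure A ↔ ∀ F : Set ι, F.Finite → ∀ ε > 0, ∃ f ∈ A, ∀ i ∈ F, dist (f i) (g i) < ε := by
  have hbasis := hasBasis_pi_same_index (fun i => Metric.nhds_basis_ball (x := g i))
    fun F δ hF hδ => by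
      obtain ⟨ε, hεδ, hε⟩ := ((hF.eventually_all.2 fun i hi =>
        Ioc_mem_nhdsGT (hδ i hi)).and self_mem_nhdsWithin).exists
      exact ⟨ε, hε, fun i hi => Metric.ball_subset_ball (hεδ i hi).2⟩
  rw [← nhds_pi] at hbasis
  rw [mem_closure_iff_nhds_basis hbasis]
  simp only [Prod.forall, and_imp, Set.mem_pi, Metric.mem_ball]
  exact ⟨fun h F hF ε hε => h F ε hF hε, fun h F ε hF hε => h F hF ε hε⟩

section FunctionSpaces

variable {X : Type u} [TopologicalSpace X]

theorem exists_continuousMap_eqOn_zero_one_of_isCompact [CompletelyRegularSpace X] {K U : Set X}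
    (hK : IsCompact K) (hU : IsOpen U) (hKU : K ⊆ U) :
    ∃ f : C(X, ℝ), EqOn f 0 K ∧ EqOn f 1 Uᶜ := by
  obtain ⟨V, hV, rfl⟩ := isInducing_stoneCechUnit.isOpen_iff.1 hU
  obtain ⟨g, hg0, hg1, -⟩ := exists_continuous_zero_one_of_isClosed
    (hK.image continuous_stoneCechUnit).isClosed hV.isClosed_compl
    (disjoint_compl_right_iff_subset.2 (image_subset_iff.2 hKU))
  exact ⟨g.comp ⟨stoneCechUnit, continuous_stoneCechUnit⟩,
    fun x hx => hg0 (mem_image_of_mem _ hx), fun x hx => hg1 hx⟩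

theorem mem_closure_compactOpen_iff {Y : Type*} [PseudoMetricSpace Y] {A : Set C(X, Y)}
    {g : C(X, Y)} :
    g ∈ closure A ↔ ∀ K : Set X, IsCompact K → ∀ ε > 0, ∃ f ∈ A, ∀ x ∈ K, dist (f x) (g x) < ε := by
  rw [mem_closure_iff_nhds_basis
    (nhds_basis_uniformity Metric.uniformity_basis_dist.compactConvergenceUniformity)]
  simp only [Prod.forall, and_imp, mem_ofPred_eq]
  exact ⟨fun h K hK ε hε => h K ε hK hε, fun h K ε hK hε => h K hK ε hε⟩

theorem mem_closure_pointwiseTopology_iff {A : Set C(X, ℝ)} {g : C(X, ℝ)} :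
    g ∈ @closure _ (pointwiseTopology X) A ↔
      ∀ F : Set X, F.Finite → ∀ ε > 0, ∃ f ∈ A, ∀ x ∈ F, dist (f x) (g x) < ε := by
  rw [pointwiseTopology, closure_induced, mem_closure_pi_iff_forall_finite]
  simp only [exists_mem_image]

end FunctionSpaces

section Covers

variable {X : Type u} [TopologicalSpace X] {𝒰 : Set (Set X)}

theorem IsOmegaCover.diff_finite {𝒲 : Set (Set X)} (h𝒰 : IsOmegaCover 𝒰) (h𝒲 : 𝒲.Finite) :
    IsOmegaCover (𝒰 \ 𝒲) := by
  obtain ⟨hopen, -, hproper, hfin⟩ := h𝒰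
  have exists_superset : ∀ F : Set X, F.Finite → ∃ U ∈ 𝒰 \ 𝒲, F ⊆ U := by
    intro F hF
    obtain ⟨G, hG, hGW⟩ := exists_finite_forall_not_subset (h𝒲.inter_of_right 𝒰)
      fun h => hproper h.1
    obtain ⟨U, hU, hFGU⟩ := hfin (F ∪ G) (hF.union hG)
    rw [union_subset_iff] at hFGU
    exact ⟨U, ⟨hU, fun hUW => hGW U ⟨hU, hUW⟩ hFGU.2⟩, hFGU.1⟩
  exact ⟨fun U hU => hopen U hU.1,
    sUnion_eq_univ_iff.2 fun x => by simpa using exists_superset {x} (finite_singleton x),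
    fun h => hproper h.1, exists_superset⟩

theorem IsOmegaCover.exists_ge_superset {𝒱 : ℕ → Set (Set X)} (h : IsOmegaCover (⋃ n, 𝒱 n))
    (hfin : ∀ n, (𝒱 n).Finite) (N : ℕ) {F : Set X} (hF : F.Finite) :
    ∃ n ≥ N, ∃ V ∈ 𝒱 n, F ⊆ V := by
  obtain ⟨-, -, -, htail⟩ :=
    h.diff_finite ((finite_Iio N).biUnion fun n _ => hfin n)
  obtain ⟨V, ⟨hV, hVN⟩, hFV⟩ := htail F hF
  obtain ⟨n, hn⟩ := mem_iUnion.1 hV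
  exact ⟨n, not_lt.1 fun hnN => hVN (mem_biUnion hnN hn), V, hn, hFV⟩

/-- The continuous functions equal to `1` off some member of `𝒰`, through which the covering
properties of `𝒰` are expressed as closure properties in `C(X, ℝ)`. -/
def functionsOneOff (𝒰 : Set (Set X)) : Set C(X, ℝ) :=
  {f | ∃ U ∈ 𝒰, EqOn f 1 Uᶜ}

theorem exists_finite_subset_functionsOneOff {B : Set C(X, ℝ)} (hB : B.Finite)
    (hB𝒰 : B ⊆ functionsOneOff 𝒰) : ∃ 𝒱 ⊆ 𝒰, 𝒱.Finite ∧ B ⊆ functionsOneOff 𝒱 := by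
  choose! V hV hfV using fun (f : C(X, ℝ)) (hf : f ∈ B) => hB𝒰 hf
  exact ⟨V '' B, image_subset_iff.2 hV, hB.image V,
    fun f hf => ⟨V f, mem_image_of_mem V hf, hfV f hf⟩⟩

theorem functionsOneOff_mono : Monotone (functionsOneOff (X := X)) :=
  fun _ _ h𝒰𝒱 _ ⟨U, hU, hfU⟩ => ⟨U, h𝒰𝒱 hU, hfU⟩

theorem IsKCover.omegaKZero_functionsOneOff [CompletelyRegularSpace X] (h𝒰 : IsKCover 𝒰) :
    OmegaKZero X (functionsOneOff 𝒰) := by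
  obtain ⟨hopen, -, hproper, hcompact⟩ := h𝒰
  refine ⟨?_, mem_closure_compactOpen_iff.2 fun K hK ε hε => ?_⟩
  · rintro ⟨U, hU, hU1⟩
    obtain ⟨x, hx⟩ := (ne_univ_iff_exists_notMem U).1 (ne_of_mem_of_not_mem hU hproper)
    exact zero_ne_one (hU1 hx)
  · obtain ⟨U, hU, hKU⟩ := hcompact K hK
    obtain ⟨f, hf0, hf1⟩ := exists_continuousMap_eqOn_zero_one_of_isCompact hK (hopen U hU) hKU
    exact ⟨f, ⟨U, hU, hf1⟩, fun x hx => by simpa [hf0 hx] using hε⟩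

theorem isOmegaCover_of_zero_mem_closure_functionsOneOff (hopen : ∀ U ∈ 𝒰, IsOpen U)
    (hproper : univ ∉ 𝒰) (h0 : 0 ∈ @closure _ (pointwiseTopology X) (functionsOneOff 𝒰)) :
    IsOmegaCover 𝒰 := by
  have exists_superset : ∀ F : Set X, F.Finite → ∃ U ∈ 𝒰, F ⊆ U := by
    intro F hF
    obtain ⟨f, ⟨U, hU, hfU⟩, hfF⟩ := mem_closure_pointwiseTopology_iff.1 h0 F hF 1 one_pos
    refine ⟨U, hU, fun x hxF => ?_⟩
    by_contra hxU
    simpa [hfU hxU] using hfF x hxF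
  exact ⟨hopen,
    sUnion_eq_univ_iff.2 fun x => by simpa using exists_superset {x} (finite_singleton x),
    hproper, exists_superset⟩

/-- The open sets `{|f| < ε}` with `f ∈ A`, through which closure properties of `A` are expressed as
covering properties of `X`. -/
def sublevelFamily (ε : ℝ) (A : Set C(X, ℝ)) : Set (Set X) :=
  (fun f : C(X, ℝ) => {x | |f x| < ε}) '' A

theorem exists_finite_sublevelFamily_eq {A : Set C(X, ℝ)} {ε : ℝ} (h𝒰 : 𝒰.Finite)
    (h𝒰A : 𝒰 ⊆ sublevelFamily ε A) : ∃ B ⊆ A, B.Finite ∧ sublevelFamily ε B = 𝒰 :=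
  exists_subset_image_finite_and (p := (· = 𝒰)).1 ⟨𝒰, h𝒰A, h𝒰, rfl⟩

theorem isKCover_sublevelFamily {A : Set C(X, ℝ)} {ε : ℝ} (hA : 0 ∈ closure A) (hε : 0 < ε)
    (hlarge : ∀ f ∈ A, ∃ x, ε ≤ |f x|) : IsKCover (sublevelFamily ε A) := by
  have exists_superset : ∀ K : Set X, IsCompact K → ∃ U ∈ sublevelFamily ε A, K ⊆ U := by
    intro K hK
    obtain ⟨f, hfA, hfK⟩ := mem_closure_compactOpen_iff.1 hA K hK ε hε
    exact ⟨_, mem_image_of_mem _ hfA, fun x hx => by simpa using hfK x hx⟩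
  refine ⟨?_, sUnion_eq_univ_iff.2 fun x => by simpa using exists_superset {x} isCompact_singleton,
    ?_, exists_superset⟩
  · rintro _ ⟨f, -, rfl⟩
    exact isOpen_lt (by fun_prop) continuous_const
  · rintro ⟨f, hfA, hf⟩
    obtain ⟨x, hx⟩ := hlarge f hfA
    exact hx.not_gt (eq_univ_iff_forall.1 hf x)

theorem zero_mem_closure_of_isOmegaCover_sublevelFamily {B : ℕ → Set C(X, ℝ)} {ε : ℕ → ℝ}
    (hε : Tendsto ε atTop (𝓝 0)) (hfin : ∀ n, (B n).Finite)
    (hcover : IsOmegaCover (⋃ n, sublevelFamily (ε n) (B n))) :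
    0 ∈ @closure _ (pointwiseTopology X) (⋃ n, B n) := by
  refine mem_closure_pointwiseTopology_iff.2 fun F hF δ hδ => ?_
  obtain ⟨N, hN⟩ := eventually_atTop.1 (hε.eventually_lt_const hδ)
  obtain ⟨n, hn, _, ⟨f, hf, rfl⟩, hfF⟩ :=
    hcover.exists_ge_superset (fun n => (hfin n).image _) N hF
  exact ⟨f, mem_iUnion.2 ⟨n, hf⟩, fun x hx => by simpa using (hfF hx).trans (hN n hn)⟩

theorem zero_mem_closure_range_of_abs_lt {f : ℕ → C(X, ℝ)} {ε : ℕ → ℝ}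
    (hε : Tendsto ε atTop (𝓝 0)) (hf : ∀ n x, |f n x| < ε n) :
    0 ∈ @closure _ (pointwiseTopology X) (range f) := by
  refine mem_closure_pointwiseTopology_iff.2 fun F _ δ hδ => ?_
  obtain ⟨n, hn⟩ := (hε.eventually_lt_const hδ).exists
  exact ⟨f n, mem_range_self n, fun x _ => by simpa using (hf n x).trans hn⟩

end Covers

section Selection

variable {X : Type u} [TopologicalSpace X]

theorem sfinSel_isKCover_isOmegaCover_of_sfinSel_closure [CompletelyRegularSpace X]
    (h : SfinSel {A : Set C(X, ℝ) | OmegaKZero X A}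
      {A : Set C(X, ℝ) | (0 : C(X, ℝ)) ∈ @closure _ (pointwiseTopology X) A}) :
    SfinSel {𝒰 : Set (Set X) | IsKCover 𝒰} {𝒰 : Set (Set X) | IsOmegaCover 𝒰} := by
  intro 𝒰 h𝒰
  obtain ⟨B, hB, hB0⟩ := h (fun n => functionsOneOff (𝒰 n))
    fun n => (h𝒰 n).omegaKZero_functionsOneOff
  choose 𝒱 h𝒱𝒰 h𝒱fin hB𝒱 using
    fun n => exists_finite_subset_functionsOneOff (hB n).1 (hB n).2
  refine ⟨𝒱, fun n => ⟨h𝒱fin n, h𝒱𝒰 n⟩, ?_⟩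
  have hB_subset : ⋃ n, B n ⊆ functionsOneOff (⋃ n, 𝒱 n) :=
    iUnion_subset fun n => (hB𝒱 n).trans (functionsOneOff_mono (subset_iUnion 𝒱 n))
  refine isOmegaCover_of_zero_mem_closure_functionsOneOff ?_ ?_
    (@closure_mono _ (pointwiseTopology X) _ _ hB_subset _ hB0)
  · intro V hV
    obtain ⟨n, hn⟩ := mem_iUnion.1 hV
    exact (h𝒰 n).1 V (h𝒱𝒰 n hn)
  · intro huniv
    obtain ⟨n, hn⟩ := mem_iUnion.1 huniv
    exact (h𝒰 n).2.2.1 (h𝒱𝒰 n hn)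

theorem exists_finite_selection_of_forall_exists_le_abs
    (h : SfinSel {𝒰 : Set (Set X) | IsKCover 𝒰} {𝒰 : Set (Set X) | IsOmegaCover 𝒰})
    {A : ℕ → Set C(X, ℝ)} (hA : ∀ n, 0 ∈ closure (A n)) {ε : ℕ → ℝ} (hε_pos : ∀ n, 0 < ε n)
    (hε : Tendsto ε atTop (𝓝 0)) (hlarge : ∀ n, ∀ f ∈ A n, ∃ x, ε n ≤ |f x|) :
    ∃ B : ℕ → Set C(X, ℝ), (∀ n, (B n).Finite ∧ B n ⊆ A n) ∧
      0 ∈ @closure _ (pointwiseTopology X) (⋃ n, B n) := by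
  obtain ⟨𝒱, h𝒱, hcover⟩ := h (fun n => sublevelFamily (ε n) (A n))
    fun n => isKCover_sublevelFamily (hA n) (hε_pos n) (hlarge n)
  choose B hBA hBfin hB𝒱 using
    fun n => exists_finite_sublevelFamily_eq (h𝒱 n).1 (h𝒱 n).2
  obtain rfl : (fun n => sublevelFamily (ε n) (B n)) = 𝒱 := funext hB𝒱
  exact ⟨B, fun n => ⟨hBfin n, hBA n⟩,
    zero_mem_closure_of_isOmegaCover_sublevelFamily hε hBfin hcover⟩

theorem sfinSel_closure_of_sfinSel_isKCover_isOmegaCover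
    (h : SfinSel {𝒰 : Set (Set X) | IsKCover 𝒰} {𝒰 : Set (Set X) | IsOmegaCover 𝒰}) :
    SfinSel {A : Set C(X, ℝ) | OmegaKZero X A}
      {A : Set C(X, ℝ) | (0 : C(X, ℝ)) ∈ @closure _ (pointwiseTopology X) A} := by
  intro A hA
  let ε : ℕ → ℝ := fun n => 1 / ((n : ℝ) + 1)
  have hε : Tendsto ε atTop (𝓝 0) := tendsto_one_div_add_atTop_nhds_zero_nat
  suffices ∃ φ : ℕ → ℕ, StrictMono φ ∧ ∃ B : ℕ → Set C(X, ℝ),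
      (∀ n, (B n).Finite ∧ B n ⊆ A (φ n)) ∧ 0 ∈ @closure _ (pointwiseTopology X) (⋃ n, B n) by
    obtain ⟨φ, hφ, B, hB, hB0⟩ := this
    obtain ⟨B', hB', hunion⟩ := exists_finite_selection_of_injective hφ.injective hB
    exact ⟨B', hB', hunion ▸ hB0⟩
  by_cases hsmall : ∃ᶠ n in atTop, ∃ f ∈ A n, ∀ x, |f x| < ε n
  · obtain ⟨φ, hφ, hsmallφ⟩ := extraction_of_frequently_atTop hsmall
    choose f hfA hf using hsmallφ
    refine ⟨φ, hφ, fun n => {f n}, fun n =>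
      ⟨finite_singleton _, singleton_subset_iff.2 (hfA n)⟩, ?_⟩
    rw [iUnion_singleton_eq_range]
    exact zero_mem_closure_range_of_abs_lt (hε.comp hφ.tendsto_atTop) hf
  · obtain ⟨φ, hφ, hlargeφ⟩ := extraction_of_eventually_atTop (not_frequently.1 hsmall)
    push Not at hlargeφ
    exact ⟨φ, hφ, exists_finite_selection_of_forall_exists_le_abs h (fun n => (hA (φ n)).2)
      (fun n => Nat.one_div_pos_of_nat) (hε.comp hφ.tendsto_atTop) hlargeφ⟩

end Selection

theorem statement1_general (X : Type u) [TopologicalSpace X] [CompletelyRegularSpace X] :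
    SfinSel {A : Set C(X, ℝ) | OmegaKZero X A}
      {A : Set C(X, ℝ) | (0 : C(X, ℝ)) ∈ @closure _ (pointwiseTopology X) A} ↔
    SfinSel {𝒰 : Set (Set X) | IsKCover 𝒰} {𝒰 : Set (Set X) | IsOmegaCover 𝒰} :=
  ⟨sfinSel_isKCover_isOmegaCover_of_sfinSel_closure,
    sfinSel_closure_of_sfinSel_isKCover_isOmegaCover⟩

theorem statement1 (X : Type u) [TopologicalSpace X] [T35Space X] :
    SfinSel {A : Set C(X, ℝ) | OmegaKZero X A}
      {A : Set C(X, ℝ) | (0 : C(X, ℝ)) ∈ @closure _ (pointwiseTopology X) A} ↔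
    SfinSel {𝒰 : Set (Set X) | IsKCover 𝒰} {𝒰 : Set (Set X) | IsOmegaCover 𝒰} :=
  statement1_general X
end

section
/- Let X be a Tychonoff space with iw(X) = ℵ₀. If the bitopological function space (C(X), τ_k, τ_p) satisfies S₁(𝒟^k, 𝒟^p) — i.e., for every sequence (D_n) of dense subsets of C_k(X) one can choose f_n ∈ D_n such that {f_n : n ∈ ℕ} is dense in C_p(X) — then X satisfies S₁(𝒦, Ω), i.e., for every sequence (𝒰_n) of open k-covers of X one can choose U_n ∈ 𝒰_n such that {U_n : n ∈ ℕ} is an ω-cover of X. -/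
open Set Filter Topology TopologicalSpace

universe u

/-!
Given a k-cover `𝒰`, a continuous function can be altered outside any compact set so as to become
constantly `1` off a member of `𝒰`; hence the functions equal to `1` off a member of `𝒰` are dense
in `C_k(X)`. Select `f n` equal to `1` off `U n ∈ 𝒰 n` so that `0` is a pointwise limit point of the
`f n`. For each finite `F` some `f n` then avoids the value `1` on `F`, which forces `F ⊆ U n`.
-/

section Interpolation

variable {X Y E : Type*} [TopologicalSpace X] [TopologicalSpace Y]

theorem exists_continuousMap_zero_one_of_isCompact_subset_isOpen [CompletelyRegularSpace X]
    {K U : Set X} (hK : IsCompact K) (hU : IsOpen U) (hKU : K ⊆ U) :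
    ∃ φ : C(X, ℝ), EqOn φ 0 K ∧ EqOn φ 1 Uᶜ := by
  -- Urysohn's lemma applies in the Stone–Čech compactification, where the image of `K` is closed.
  obtain ⟨V, hV, rfl⟩ := isInducing_stoneCechUnit.isOpen_iff.1 hU
  obtain ⟨ψ, hψ0, hψ1, -⟩ := exists_continuous_zero_one_of_isClosed
    (hK.image continuous_stoneCechUnit).isClosed hV.isClosed_compl
    (disjoint_compl_right_iff_subset.2 (image_subset_iff.2 hKU))
  exact ⟨ψ.comp ⟨stoneCechUnit, continuous_stoneCechUnit⟩,
    fun _ hx => hψ0 (mem_image_of_mem _ hx), fun _ hx => hψ1 hx⟩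

theorem exists_continuousMap_eqOn_isCompact_eqOn_compl [CompletelyRegularSpace X]
    [AddCommMonoid E] [Module ℝ E] [TopologicalSpace E] [ContinuousAdd E] [ContinuousSMul ℝ E]
    (f g : C(X, E)) {K U : Set X} (hK : IsCompact K) (hU : IsOpen U) (hKU : K ⊆ U) :
    ∃ h : C(X, E), EqOn h f K ∧ EqOn h g Uᶜ := by
  obtain ⟨φ, hφ0, hφ1⟩ := exists_continuousMap_zero_one_of_isCompact_subset_isOpen hK hU hKU
  refine ⟨⟨fun x => (1 - φ x) • f x + φ x • g x, by fun_prop⟩, fun x hx => ?_, fun x hx => ?_⟩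
  · simp [hφ0 hx]
  · simp [hφ1 hx]

theorem dense_of_forall_isCompact_exists_eqOn {D : Set C(X, Y)}
    (hD : ∀ (f : C(X, Y)) (K : Set X), IsCompact K → ∃ g ∈ D, EqOn g f K) : Dense D := by
  intro f
  refine mem_closure_iff_nhds.2 fun N hN => ?_
  obtain ⟨S, hSfin, hS, hSN⟩ := ContinuousMap.mem_nhds_iff.1 hN
  have hcompact : IsCompact (⋃ p ∈ S, p.1) :=
    hSfin.isCompact_biUnion fun p hp => (hS p.1 p.2 hp).1
  obtain ⟨g, hgD, hgf⟩ := hD f _ hcompact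
  refine ⟨g, hSN fun K W hKW => ?_, hgD⟩
  exact (hS K W hKW).2.2.congr fun x hx => (hgf (mem_biUnion hKW hx)).symm

end Interpolation

section Covers

variable {X : Type u} [TopologicalSpace X]

/-- The continuous functions that are constantly `1` off some member of `𝒰`; they encode the choice
of a member of `𝒰` as the choice of a function. -/
def eqOneOffMember (𝒰 : Set (Set X)) : Set C(X, ℝ) :=
  {f | ∃ U ∈ 𝒰, EqOn f 1 Uᶜ}

theorem IsKCover.dense_eqOneOffMember [CompletelyRegularSpace X] {𝒰 : Set (Set X)}
    (h𝒰 : IsKCover 𝒰) : Dense (eqOneOffMember 𝒰) := by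
  obtain ⟨hopen, -, -, hcompact⟩ := h𝒰
  refine dense_of_forall_isCompact_exists_eqOn fun f K hK => ?_
  obtain ⟨U, hU, hKU⟩ := hcompact K hK
  obtain ⟨g, hgf, hg1⟩ := exists_continuousMap_eqOn_isCompact_eqOn_compl f 1 hK (hopen U hU) hKU
  exact ⟨g, ⟨U, hU, hg1⟩, hgf⟩

theorem isOpen_pointwiseTopology_setOf_mapsTo {F : Set X} (hF : F.Finite) {W : Set ℝ}
    (hW : IsOpen W) : IsOpen[pointwiseTopology X] {f : C(X, ℝ) | MapsTo f F W} :=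
  isOpen_induced_iff.2 ⟨F.pi fun _ => W, isOpen_set_pi hF fun _ _ => hW, rfl⟩

theorem exists_mem_mapsTo_of_mem_closure_pointwiseTopology {A : Set C(X, ℝ)} {f : C(X, ℝ)}
    (hf : f ∈ @closure _ (pointwiseTopology X) A) {F : Set X} (hF : F.Finite) {W : Set ℝ}
    (hW : IsOpen W) (hfW : MapsTo f F W) : ∃ g ∈ A, MapsTo g F W := by
  obtain ⟨g, hgW, hgA⟩ := (@mem_closure_iff _ (pointwiseTopology X) _ _).1 hf _
    (isOpen_pointwiseTopology_setOf_mapsTo hF hW) hfW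
  exact ⟨g, hgA, hgW⟩

theorem isOmegaCover_of_forall_finite {𝒰 : Set (Set X)} (hopen : ∀ U ∈ 𝒰, IsOpen U)
    (hne : univ ∉ 𝒰) (hfin : ∀ F : Set X, F.Finite → ∃ U ∈ 𝒰, F ⊆ U) : IsOmegaCover 𝒰 := by
  refine ⟨hopen, eq_univ_of_forall fun x => ?_, hne, hfin⟩
  obtain ⟨U, hU, hxU⟩ := hfin {x} (finite_singleton x)
  exact ⟨U, hU, hxU rfl⟩

theorem isOmegaCover_range_of_zero_mem_closure_range {ι : Type*} {U : ι → Set X}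
    {f : ι → C(X, ℝ)} (hopen : ∀ i, IsOpen (U i)) (hne : ∀ i, U i ≠ univ)
    (hfU : ∀ i, EqOn (f i) 1 (U i)ᶜ)
    (hf : (0 : C(X, ℝ)) ∈ @closure _ (pointwiseTopology X) (range f)) :
    IsOmegaCover (range U) := by
  refine isOmegaCover_of_forall_finite (forall_mem_range.2 hopen)
    (fun ⟨i, hi⟩ => hne i hi) fun F hF => ?_
  obtain ⟨_, ⟨i, rfl⟩, hi⟩ := exists_mem_mapsTo_of_mem_closure_pointwiseTopology hf hF
    (isOpen_compl_singleton (x := (1 : ℝ))) fun _ _ => zero_ne_one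
  exact ⟨U i, mem_range_self i, fun x hx => not_not.1 fun hxU => hi hx (hfU i hxU)⟩

end Covers

theorem statement3_general (X : Type u) [TopologicalSpace X] [CompletelyRegularSpace X]
    (h : S1sel {D : Set C(X, ℝ) | Dense D}
      {A : Set C(X, ℝ) | (0 : C(X, ℝ)) ∈ @closure _ (pointwiseTopology X) A}) :
    S1sel {𝒰 : Set (Set X) | IsKCover 𝒰} {𝒰 : Set (Set X) | IsOmegaCover 𝒰} := by
  intro 𝒰 h𝒰
  obtain ⟨f, hf, hf0⟩ := h (fun n => eqOneOffMember (𝒰 n)) fun n => (h𝒰 n).dense_eqOneOffMember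
  choose U hU hfU using hf
  have hopen (n : ℕ) : IsOpen (U n) := (h𝒰 n).1 _ (hU n)
  have hne (n : ℕ) : U n ≠ univ := fun hn => (h𝒰 n).2.2.1 (hn ▸ hU n)
  exact ⟨U, hU, isOmegaCover_range_of_zero_mem_closure_range hopen hne hfU hf0⟩

theorem statement3 (X : Type u) [TopologicalSpace X] [T35Space X]
    (hiw : CountableIWeight X)
    (h : S1sel {D : Set C(X, ℝ) | Dense D}
      {D : Set C(X, ℝ) | @Dense _ (pointwiseTopology X) D}) :
    S1sel {𝒰 : Set (Set X) | IsKCover 𝒰} {𝒰 : Set (Set X) | IsOmegaCover 𝒰} :=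
  statement3_general X fun D hD => (h D hD).imp fun _ hf => ⟨hf.1, hf.2 0⟩
end

section
/- Let X be a Tychonoff space with iw(X) = ℵ₀. If X satisfies S₁(𝒦, Ω) — i.e., for every sequence (𝒰_n) of open k-covers of X one can choose U_n ∈ 𝒰_n such that {U_n : n ∈ ℕ} is an ω-cover of X — then the bitopological function space (C(X), τ_k, τ_p) satisfies S₁(Ω^k_0, Ω^p_0): for every sequence (A_n) of subsets of C(X) each having the constant zero function 0 in its closure in C_k(X) but with 0 ∉ A_n, one can choose f_n ∈ A_n such that 0 lies in the closure of {f_n : n ∈ ℕ} in C_p(X). -/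
open Set Filter Topology TopologicalSpace

universe u

/-!
Small functions correspond to large open sets: if `0` is in the compact-open closure of `A`, then
the sets `{x | |f x| < ε}`, `f ∈ A`, swallow every compact set, and a selection of such sets
swallowing every finite set infinitely often, for `ε = 1 / (n + 1)`, gives functions accumulating
pointwise at `0`. These sets need not form a k-cover, as the whole space may be among them. If every
compact set has a proper open neighbourhood, passing to their proper open subsets restores
nontriviality; otherwise the whole space is a member at every stage and can be selected each time.
-/

section

variable {X : Type u} [TopologicalSpace X]

lemma isKCover_iff {𝒰 : Set (Set X)} :
    IsKCover 𝒰 ↔ (∀ U ∈ 𝒰, IsOpen U) ∧ univ ∉ 𝒰 ∧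
      ∀ K : Set X, IsCompact K → ∃ U ∈ 𝒰, K ⊆ U := by
  refine ⟨fun ⟨hopen, _, huniv, hK⟩ => ⟨hopen, huniv, hK⟩, fun ⟨hopen, huniv, hK⟩ =>
    ⟨hopen, eq_univ_of_forall fun x => ?_, huniv, hK⟩⟩
  obtain ⟨U, hU, hxU⟩ := hK {x} isCompact_singleton
  exact ⟨U, hU, hxU rfl⟩

lemma IsOmegaCover.frequently_subset {U : ℕ → Set X} (hU : IsOmegaCover (range U)) {F : Set X}
    (hF : F.Finite) : ∃ᶠ n in atTop, F ⊆ U n := by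
  obtain ⟨-, -, huniv, hfin⟩ := hU
  have hne : ∀ n, ∃ x, x ∉ U n := fun n =>
    (ne_univ_iff_exists_notMem _).1 fun hn => huniv ⟨n, hn⟩
  choose x hx using hne
  refine frequently_atTop.2 fun m => ?_
  -- A member containing a point missed by each of `U 0, …, U (m - 1)` has index at least `m`.
  obtain ⟨_, ⟨n, rfl⟩, hn⟩ := hfin (F ∪ x '' Iio m) (hF.union ((finite_Iio m).image x))
  obtain ⟨hFn, hxn⟩ := union_subset_iff.1 hn
  exact ⟨n, not_lt.1 fun hnm => hx n (hxn (mem_image_of_mem x hnm)), hFn⟩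

lemma isKCover_proper_open_subsets {𝒰 : Set (Set X)} (hopen : ∀ U ∈ 𝒰, IsOpen U)
    (hcompact : ∀ K : Set X, IsCompact K → ∃ U ∈ 𝒰, K ⊆ U)
    (hproper : ∀ K : Set X, IsCompact K → ∃ V, IsOpen V ∧ K ⊆ V ∧ V ≠ univ) :
    IsKCover {W | IsOpen W ∧ W ≠ univ ∧ ∃ U ∈ 𝒰, W ⊆ U} := by
  refine isKCover_iff.2 ⟨fun W hW => hW.1, fun huniv => huniv.2.1 rfl, fun K hK => ?_⟩
  obtain ⟨U, hU, hKU⟩ := hcompact K hK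
  obtain ⟨V, hV, hKV, hVne⟩ := hproper K hK
  exact ⟨U ∩ V, ⟨(hopen U hU).inter hV, fun h => hVne (univ_subset_iff.1 (h ▸ inter_subset_right)),
    U, hU, inter_subset_left⟩, subset_inter hKU hKV⟩

lemma exists_selection_frequently_finite_subset
    (h : S1sel {𝒰 : Set (Set X) | IsKCover 𝒰} {𝒰 : Set (Set X) | IsOmegaCover 𝒰})
    {𝒰 : ℕ → Set (Set X)} (hopen : ∀ n, ∀ U ∈ 𝒰 n, IsOpen U)
    (hcompact : ∀ n, ∀ K : Set X, IsCompact K → ∃ U ∈ 𝒰 n, K ⊆ U) :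
    ∃ U : ℕ → Set X, (∀ n, U n ∈ 𝒰 n) ∧
      ∀ F : Set X, F.Finite → ∃ᶠ n in atTop, F ⊆ U n := by
  by_cases hproper : ∀ K : Set X, IsCompact K → ∃ V, IsOpen V ∧ K ⊆ V ∧ V ≠ univ
  · obtain ⟨W, hW, hWcover⟩ :=
      h _ fun n => isKCover_proper_open_subsets (hopen n) (hcompact n) hproper
    choose _ _ U hU hWU using hW
    exact ⟨U, hU, fun F hF => (hWcover.frequently_subset hF).mono fun n hn => hn.trans (hWU n)⟩
  · push Not at hproper
    obtain ⟨K, hK, hKuniv⟩ := hproper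
    have huniv : ∀ n, univ ∈ 𝒰 n := fun n => by
      obtain ⟨U, hU, hKU⟩ := hcompact n K hK
      exact hKuniv U (hopen n U hU) hKU ▸ hU
    exact ⟨fun _ => univ, huniv, fun F _ => Frequently.of_forall fun _ => subset_univ F⟩

lemma exists_norm_lt_of_zero_mem_closure {E : Type*} [SeminormedAddCommGroup E] {A : Set C(X, E)}
    (hA : 0 ∈ closure A) {K : Set X} (hK : IsCompact K) {ε : ℝ} (hε : 0 < ε) :
    ∃ f ∈ A, ∀ x ∈ K, ‖f x‖ < ε := by
  have hsmall : ∀ᶠ f : C(X, E) in 𝓝 0, MapsTo f K (Metric.ball 0 ε) :=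
    ContinuousMap.eventually_mapsTo hK Metric.isOpen_ball fun _ _ => Metric.mem_ball_self hε
  obtain ⟨f, hfA, hf⟩ := ((mem_closure_iff_frequently.1 hA).and_eventually hsmall).exists
  exact ⟨f, hfA, fun x hx => mem_ball_zero_iff.1 (hf hx)⟩

lemma zero_mem_closure_pointwiseTopology_iff {A : Set C(X, ℝ)} :
    0 ∈ @closure _ (pointwiseTopology X) A ↔
      ∀ F : Set X, F.Finite → ∀ ε > 0, ∃ f ∈ A, ∀ x ∈ F, ‖f x‖ < ε := by
  have hbasis : (𝓝 (0 : X → ℝ)).HasBasis (fun Fε : Set X × ℝ => Fε.1.Finite ∧ 0 < Fε.2)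
      fun Fε => Fε.1.pi fun _ => Metric.ball 0 Fε.2 := by
    rw [nhds_pi]
    exact Metric.nhds_basis_ball.pi_self
  rw [pointwiseTopology, closure_induced, ContinuousMap.coe_zero, mem_closure_iff_nhds_basis hbasis]
  simp only [mem_image, Set.mem_pi, Metric.mem_ball, dist_zero_right, exists_exists_and_eq_and,
    and_imp, Prod.forall, gt_iff_lt]
  exact forall_congr' fun F => forall_comm

theorem statement4_general
    (h : S1sel {𝒰 : Set (Set X) | IsKCover 𝒰} {𝒰 : Set (Set X) | IsOmegaCover 𝒰}) :
    S1sel {A : Set C(X, ℝ) | 0 ∈ closure A}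
      {A : Set C(X, ℝ) | 0 ∈ @closure _ (pointwiseTopology X) A} := by
  intro A hA
  have hopen (n : ℕ) :
      ∀ U ∈ (fun f : C(X, ℝ) => {x | ‖f x‖ < 1 / ((n : ℝ) + 1)}) '' A n, IsOpen U :=
    forall_mem_image.2 fun f _ => isOpen_lt f.continuous.norm continuous_const
  obtain ⟨U, hU, hfreq⟩ := exists_selection_frequently_finite_subset h hopen fun n K hK =>
    exists_mem_image.2 (exists_norm_lt_of_zero_mem_closure (hA n) hK Nat.one_div_pos_of_nat)
  choose f hfA hfU using hU
  refine ⟨f, hfA, zero_mem_closure_pointwiseTopology_iff.2 fun F hF ε hε => ?_⟩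
  have hsmall : ∀ᶠ n : ℕ in atTop, 1 / ((n : ℝ) + 1) < ε :=
    tendsto_one_div_add_atTop_nhds_zero_nat.eventually_lt_const hε
  obtain ⟨n, hFn, hn⟩ := ((hfreq F hF).and_eventually hsmall).exists
  rw [← hfU] at hFn
  exact ⟨f n, mem_range_self n, fun x hx => (hFn hx).trans hn⟩

end

theorem statement4 (X : Type u) [TopologicalSpace X] [T35Space X]
    (hiw : CountableIWeight X)
    (h : S1sel {𝒰 : Set (Set X) | IsKCover 𝒰} {𝒰 : Set (Set X) | IsOmegaCover 𝒰}) :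
    S1sel {A : Set C(X, ℝ) | OmegaKZero X A}
      {A : Set C(X, ℝ) | (0 : C(X, ℝ)) ∈ @closure _ (pointwiseTopology X) A} :=
  fun A hA => statement4_general h A fun n => (hA n).2
end

section
/- For a Tychonoff space X, if X satisfies S_fin(𝒦, Γ) — i.e., for every sequence (𝒰_n) of open k-covers of X one can choose finite 𝒱_n ⊆ 𝒰_n such that ⋃_n 𝒱_n is a γ-cover of X — then X satisfies S₁(𝒦, Γ), i.e., for every sequence (𝒰_n) of open k-covers of X one can choose U_n ∈ 𝒰_n such that {U_n : n ∈ ℕ} is a γ-cover of X. -/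
open Set Filter Topology TopologicalSpace

universe u

/-!
Apply `S_fin` to the common refinements of the first `n + 1` covers, for each `n`. The resulting
γ-cover is infinite, while only finitely many of its members are selected at stages before `n`, so
some member `W n` is selected only at stages `m ≥ n`; it therefore lies inside some `U n` from the
`n`-th cover. No set occurs infinitely often among the `W n`, so every point lies in `W n ⊆ U n`
for all large `n`. Since each `U n` misses a point, no set occurs infinitely often among the `U n`
either, so they form an infinite family and hence a γ-cover.
-/

/-- The `n`-th common refinement of a sequence of families of sets: all intersections
`⋂ i ≤ n, U i` with `U i ∈ A i`. The sequence `U` is indexed by all of `ℕ`, so the refinement is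
empty as soon as one `A i` is, even for `i > n`. -/
def commonRefinement {α : Type*} (A : ℕ → Set (Set α)) (n : ℕ) : Set (Set α) :=
  (fun U : ℕ → Set α => dissipate U n) '' univ.pi A

theorem exists_superset_of_mem_commonRefinement {α : Type*} {A : ℕ → Set (Set α)} {m n : ℕ}
    {V : Set α} (hV : V ∈ commonRefinement A n) (hmn : m ≤ n) : ∃ U ∈ A m, V ⊆ U := by
  obtain ⟨U, hU, rfl⟩ := hV
  exact ⟨U m, hU m (mem_univ m), dissipate_subset hmn⟩

theorem exists_tendsto_cofinite_mem_of_infinite_iUnion {α : Type*} {B : ℕ → Set α}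
    (hfin : ∀ n, (B n).Finite) (hinf : (⋃ n, B n).Infinite) :
    ∃ W : ℕ → α, Tendsto W atTop cofinite ∧ ∀ n, ∃ m ≥ n, W n ∈ B m := by
  have hfresh (n : ℕ) : ∃ w ∈ ⋃ m, B m, w ∉ ⋃ m ∈ Iio n, B m :=
    hinf.exists_notMem_finite ((finite_Iio n).biUnion fun m _ => hfin m)
  choose W hW hWfresh using hfresh
  have index_ge {m n : ℕ} (hm : W n ∈ B m) : n ≤ m :=
    not_lt.1 fun hmn => hWfresh n (mem_biUnion hmn hm)
  have index (n : ℕ) : ∃ m ≥ n, W n ∈ B m :=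
    (mem_iUnion.1 (hW n)).imp fun _ hm => ⟨index_ge hm, hm⟩
  refine ⟨W, le_cofinite_iff_eventually_ne.2 fun V => eventually_map.2 ?_, index⟩
  by_cases hV : V ∈ ⋃ m, B m
  · obtain ⟨m, hm⟩ := mem_iUnion.1 hV
    filter_upwards [eventually_gt_atTop m] with n hmn hWV
    exact hmn.not_ge (index_ge (hWV ▸ hm))
  · exact Eventually.of_forall fun n hWV => hV (hWV ▸ hW n)

theorem tendsto_cofinite_of_eventually_mem {ι α : Type*} {l : Filter ι} {b : ι → Set α}
    (hne : ∀ i, b i ≠ univ) (hmem : ∀ x, ∀ᶠ i in l, x ∈ b i) : Tendsto b l cofinite := by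
  refine le_cofinite_iff_eventually_ne.2 fun V => eventually_map.2 ?_
  by_cases hV : V = univ
  · exact Eventually.of_forall fun i hi => hne i (hi.trans hV)
  · obtain ⟨x, hx⟩ := (ne_univ_iff_exists_notMem V).1 hV
    filter_upwards [hmem x] with i hi hbV
    exact hx (hbV ▸ hi)

section Covers

variable {X : Type u} [TopologicalSpace X]

theorem isKCover_commonRefinement {A : ℕ → Set (Set X)} (hA : ∀ n, IsKCover (A n))
    (n : ℕ) : IsKCover (commonRefinement A n) := by
  have hcompact (K : Set X) (hK : IsCompact K) : ∃ V ∈ commonRefinement A n, K ⊆ V := by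
    choose U hU hKU using fun i => (hA i).2.2.2 K hK
    exact ⟨dissipate U n, mem_image_of_mem _ fun i _ => hU i, subset_iInter₂ fun i _ => hKU i⟩
  refine ⟨?_, ?_, ?_, hcompact⟩
  · rintro _ ⟨U, hU, rfl⟩
    exact (finite_Iic n).isOpen_biInter fun i _ => (hA i).1 _ (hU i (mem_univ i))
  · refine eq_univ_of_forall fun x => ?_
    obtain ⟨V, hV, hxV⟩ := hcompact {x} isCompact_singleton
    exact ⟨V, hV, singleton_subset_iff.1 hxV⟩
  · intro huniv
    obtain ⟨U, hU, hsub⟩ := exists_superset_of_mem_commonRefinement huniv n.zero_le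
    exact (hA 0).2.2.1 (univ_subset_iff.1 hsub ▸ hU)

theorem IsGammaCover.eventually_mem {𝒰 : Set (Set X)} (h𝒰 : IsGammaCover 𝒰) (x : X) :
    ∀ᶠ U in cofinite, U ∈ 𝒰 → x ∈ U := by
  simpa only [eventually_cofinite, singleton_subset_iff, Classical.not_imp] using
    h𝒰.2.2.2 {x} (finite_singleton x)

theorem isGammaCover_range_of_eventually_mem {ι : Type*} [Infinite ι] {b : ι → Set X}
    (hopen : ∀ i, IsOpen (b i)) (hne : ∀ i, b i ≠ univ)
    (hmem : ∀ x, ∀ᶠ i in cofinite, x ∈ b i) : IsGammaCover (range b) := by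
  refine ⟨forall_mem_range.2 hopen, eq_univ_of_forall fun x => ?_, fun hfinite => ?_,
    fun F hF => ?_⟩
  · obtain ⟨i, hi⟩ := (hmem x).exists
    exact ⟨b i, mem_range_self i, hi⟩
  · obtain ⟨i, hi⟩ :=
      ((tendsto_cofinite_of_eventually_mem hne hmem).eventually hfinite.compl_mem_cofinite).exists
    exact hi (mem_range_self i)
  · have hsubset : ∀ᶠ i in cofinite, F ⊆ b i := (eventually_all_finite hF).2 fun x _ => hmem x
    refine ((eventually_cofinite.1 hsubset).image b).subset ?_
    rintro _ ⟨⟨i, rfl⟩, hi⟩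
    exact mem_image_of_mem b hi

theorem SfinSel.s1sel_isGammaCover {𝒜 : Set (Set (Set X))}
    (h : SfinSel 𝒜 {𝒰 | IsGammaCover 𝒰}) (hopen : ∀ 𝒰 ∈ 𝒜, ∀ U ∈ 𝒰, IsOpen U)
    (huniv : ∀ 𝒰 ∈ 𝒜, univ ∉ 𝒰)
    (hrefine : ∀ A : ℕ → Set (Set X), (∀ n, A n ∈ 𝒜) → ∀ n, commonRefinement A n ∈ 𝒜) :
    S1sel 𝒜 {𝒰 | IsGammaCover 𝒰} := by
  intro A hA
  obtain ⟨B, hB, hγ⟩ := h (commonRefinement A) (hrefine A hA)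
  obtain ⟨W, hWcofinite, hWB⟩ :=
    exists_tendsto_cofinite_mem_of_infinite_iUnion (fun n => (hB n).1) hγ.2.2.1
  have henlarge (n : ℕ) : ∃ U ∈ A n, W n ⊆ U := by
    obtain ⟨m, hnm, hm⟩ := hWB n
    exact exists_superset_of_mem_commonRefinement ((hB m).2 hm) hnm
  choose b hbA hWb using henlarge
  refine ⟨b, hbA, isGammaCover_range_of_eventually_mem (fun n => hopen _ (hA n) _ (hbA n))
    (fun n hbn => huniv _ (hA n) (hbn ▸ hbA n)) fun x => ?_⟩
  rw [Nat.cofinite_eq_atTop]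
  filter_upwards [hWcofinite.eventually (hγ.eventually_mem x)] with n hn
  obtain ⟨m, -, hm⟩ := hWB n
  exact hWb n (hn (mem_iUnion_of_mem m hm))

end Covers

theorem statement14_general (X : Type u) [TopologicalSpace X]
    (h : SfinSel {𝒰 : Set (Set X) | IsKCover 𝒰} {𝒰 : Set (Set X) | IsGammaCover 𝒰}) :
    S1sel {𝒰 : Set (Set X) | IsKCover 𝒰} {𝒰 : Set (Set X) | IsGammaCover 𝒰} :=
  h.s1sel_isGammaCover (fun _ h𝒰 => h𝒰.1) (fun _ h𝒰 => h𝒰.2.2.1)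
    fun _ hA => isKCover_commonRefinement hA

theorem statement14 (X : Type u) [TopologicalSpace X] [T35Space X]
    (h : SfinSel {𝒰 : Set (Set X) | IsKCover 𝒰} {𝒰 : Set (Set X) | IsGammaCover 𝒰}) :
    S1sel {𝒰 : Set (Set X) | IsKCover 𝒰} {𝒰 : Set (Set X) | IsGammaCover 𝒰} :=
  statement14_general X h
end
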